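/- Let F be a division ring, n ≥ 1, A ∈ F^{n×n} and v ∈ F^{n×1}. Then the pair (A, v) is controllable if and only if for every b ∈ F^{n×1} there exists f ∈ F[z] with (vf)^ℓ(A) = b. Moreover, if (A, v) is controllable and b ∈ F^{n×1}, let p be the monic polynomial with {g : (vg)^ℓ(A) = 0} = p·F[z] and let f_ℓ(z) := Σ_{m=0}^{n−1} z^m c_m where (c_0, …, c_{n−1})^T := 𝔠_{A,v}^{−1} b. Then f_ℓ is the unique polynomial of degree < n with (v f_ℓ)^ℓ(A) = b, and a polynomial f ∈ F[z] satisfies (vf)^ℓ(A) = b if and only if f = f_ℓ + p·h for some h ∈ F[z]. -/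

import Mathlib

/-!
Left evaluation `f ↦ leftEval A v f` is additive and commutes with right multiplication by scalars,
and right multiplication by `X` becomes left multiplication by `A`, so its kernel is a right ideal
of `F[X]`. On polynomials of degree `< n` it is multiplication of the coefficient column by
`ctrbMat A v` (`leftEval_sum_fin`).

Given solvability for every `b`, the `n + 1` columns `v, Av, …, Aⁿv` are right linearly dependent,
so the kernel contains a monic polynomial `g` of degree `≤ n` (`exists_monic_leftEval_eq_zero`).
Replacing a solution `f` by its remainder modulo `g`, as in `f = g * q + r`, gives a solution of
degree `< n`; hence `ctrbMat A v` has a right inverse, which is two-sided because matrix rings over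
a division ring are Dedekind finite. The description of the solutions in the controllable case
follows from `leftEval_sum_fin` and additivity.
-/

open Polynomial Matrix Finset

section Defs

variable {F : Type*} [DivisionRing F]

/-- The scalar `c` regarded as a `1 × 1` matrix. -/
noncomputable def oneByOne (c : F) : Matrix (Fin 1) (Fin 1) F := Matrix.of fun _ _ => c

/-- Left evaluation `(v f)^{𝔢ℓ}(A) := ∑ⱼ Aʲ v fⱼ` of `f ∈ F[z]` at an input pair `(A, v)`. -/
noncomputable def leftEval {m : Type*} [Fintype m] [DecidableEq m]
    (A : Matrix m m F) (v : Matrix m (Fin 1) F) (f : F[X]) : Matrix m (Fin 1) F :=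
  ∑ j ∈ Finset.range (f.natDegree + 1), A ^ j * v * oneByOne (f.coeff j)

/-- Right evaluation `(f u)^{𝔢r}(A) := ∑ⱼ fⱼ u Aʲ` of `f ∈ F[z]` at an output pair `(u, A)`. -/
noncomputable def rightEval {m : Type*} [Fintype m] [DecidableEq m]
    (u : Matrix (Fin 1) m F) (A : Matrix m m F) (f : F[X]) : Matrix (Fin 1) m F :=
  ∑ j ∈ Finset.range (f.natDegree + 1), oneByOne (f.coeff j) * u * A ^ j

/-- Controllability matrix `[v, Av, …, A^{n-1} v]`. -/
noncomputable def ctrbMat {n : ℕ} (A : Matrix (Fin n) (Fin n) F)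
    (v : Matrix (Fin n) (Fin 1) F) : Matrix (Fin n) (Fin n) F :=
  Matrix.of fun i j => (A ^ (j : ℕ) * v) i 0

/-- Observability matrix with rows `u, uA, …, u A^{n-1}`. -/
noncomputable def obsMat {n : ℕ} (u : Matrix (Fin 1) (Fin n) F)
    (A : Matrix (Fin n) (Fin n) F) : Matrix (Fin n) (Fin n) F :=
  Matrix.of fun i j => (u * A ^ (i : ℕ)) 0 j

/-- Left companion matrix of a (monic, degree `n`) polynomial: its columns are
`e₂, …, eₙ, -(p₀, …, p_{n-1})ᵀ`. -/
noncomputable def Cl (n : ℕ) (p : F[X]) : Matrix (Fin n) (Fin n) F :=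
  Matrix.of fun i j =>
    if (j : ℕ) = n - 1 then -(p.coeff (i : ℕ)) else if (i : ℕ) = (j : ℕ) + 1 then 1 else 0

/-- Right companion matrix: the transpose of the left one. -/
noncomputable def Cr (n : ℕ) (p : F[X]) : Matrix (Fin n) (Fin n) F := (Cl n p)ᵀ

/-- First standard basis column vector of `F^{n×1}`. -/
noncomputable def e1 (F : Type*) [DivisionRing F] (n : ℕ) : Matrix (Fin n) (Fin 1) F :=
  Matrix.of fun i _ => if (i : ℕ) = 0 then 1 else 0

/-- First standard basis row vector of `F^{1×n}`. -/
noncomputable def e1row (F : Type*) [DivisionRing F] (n : ℕ) : Matrix (Fin 1) (Fin n) F :=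
  Matrix.of fun _ j => if (j : ℕ) = 0 then 1 else 0

/-- Two-sided evaluation `(v f u)^{𝔢ts}(A,B) := ∑_{i+j+1 ≤ deg f} Aⁱ v f_{i+j+1} u Bʲ`. -/
noncomputable def tsEval {n k : ℕ} (A : Matrix (Fin n) (Fin n) F) (B : Matrix (Fin k) (Fin k) F)
    (v : Matrix (Fin n) (Fin 1) F) (u : Matrix (Fin 1) (Fin k) F) (f : F[X]) :
    Matrix (Fin n) (Fin k) F :=
  ∑ i ∈ Finset.range f.natDegree, ∑ j ∈ Finset.range f.natDegree,
    A ^ i * v * oneByOne (f.coeff (i + j + 1)) * u * B ^ j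

end Defs

section Aux

variable {F : Type*} [DivisionRing F] {n : ℕ}

theorem oneByOne_zero : oneByOne (0 : F) = 0 := by
  ext; simp [oneByOne]

theorem oneByOne_add (a b : F) : oneByOne (a + b) = oneByOne a + oneByOne b := by
  ext; simp [oneByOne]

theorem oneByOne_mul (a b : F) : oneByOne (a * b) = oneByOne a * oneByOne b := by
  ext; simp [oneByOne, Matrix.mul_apply]

theorem leftEval_eq_sum (A : Matrix (Fin n) (Fin n) F) (v : Matrix (Fin n) (Fin 1) F) (f : F[X]) :
    leftEval A v f = f.sum fun j a => A ^ j * v * oneByOne a := by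
  rw [leftEval, Polynomial.sum_over_range _ (fun j => by rw [oneByOne_zero, Matrix.mul_zero])]

theorem leftEval_zero (A : Matrix (Fin n) (Fin n) F) (v : Matrix (Fin n) (Fin 1) F) :
    leftEval A v 0 = 0 := by
  simp [leftEval_eq_sum]

theorem leftEval_add (A : Matrix (Fin n) (Fin n) F) (v : Matrix (Fin n) (Fin 1) F) (f g : F[X]) :
    leftEval A v (f + g) = leftEval A v f + leftEval A v g := by
  simp only [leftEval_eq_sum]
  exact Polynomial.sum_add_index f g _ (fun j => by rw [oneByOne_zero, Matrix.mul_zero])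
    (fun j a b => by rw [oneByOne_add, Matrix.mul_add])

theorem leftEval_finset_sum (A : Matrix (Fin n) (Fin n) F) (v : Matrix (Fin n) (Fin 1) F)
    {ι : Type*} (s : Finset ι) (f : ι → F[X]) :
    leftEval A v (∑ i ∈ s, f i) = ∑ i ∈ s, leftEval A v (f i) :=
  map_sum (AddMonoidHom.mk' (leftEval A v) (leftEval_add A v)) f s

theorem leftEval_monomial (A : Matrix (Fin n) (Fin n) F) (v : Matrix (Fin n) (Fin 1) F)
    (j : ℕ) (a : F) : leftEval A v (monomial j a) = A ^ j * v * oneByOne a := by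
  rw [leftEval_eq_sum, Polynomial.sum_monomial_index _ _ (by rw [oneByOne_zero, Matrix.mul_zero])]

theorem leftEval_mul_monomial (A : Matrix (Fin n) (Fin n) F) (v : Matrix (Fin n) (Fin 1) F)
    (f : F[X]) (j : ℕ) (a : F) :
    leftEval A v (f * monomial j a) = A ^ j * leftEval A v f * oneByOne a := by
  induction f using Polynomial.induction_on' with
  | add p q hp hq =>
    rw [add_mul, leftEval_add, hp, hq, leftEval_add, Matrix.mul_add, Matrix.add_mul]
  | monomial k b =>
    rw [monomial_mul_monomial, leftEval_monomial, leftEval_monomial, oneByOne_mul, add_comm,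
      pow_add]
    simp only [Matrix.mul_assoc]

/-- The kernel of left evaluation is a right ideal. -/
theorem leftEval_mul_eq_zero (A : Matrix (Fin n) (Fin n) F) (v : Matrix (Fin n) (Fin 1) F)
    {g : F[X]} (hg : leftEval A v g = 0) (h : F[X]) : leftEval A v (g * h) = 0 := by
  induction h using Polynomial.induction_on' with
  | add p q hp hq => rw [mul_add, leftEval_add, hp, hq, add_zero]
  | monomial k b => rw [leftEval_mul_monomial, hg, Matrix.mul_zero, Matrix.zero_mul]

theorem leftEval_sum_fin (A : Matrix (Fin n) (Fin n) F) (v : Matrix (Fin n) (Fin 1) F)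
    (c : Matrix (Fin n) (Fin 1) F) :
    leftEval A v (∑ m : Fin n, X ^ (m : ℕ) * Polynomial.C (c m 0)) = ctrbMat A v * c := by
  rw [leftEval_finset_sum]
  simp only [X_pow_mul_C, C_mul_X_pow_eq_monomial, leftEval_monomial]
  ext i k
  fin_cases k
  rw [Matrix.sum_apply, Matrix.mul_apply]
  refine Finset.sum_congr rfl fun m _ => ?_
  rw [Matrix.mul_apply]
  simp [oneByOne, ctrbMat]

theorem degree_sum_fin_lt' (c : Matrix (Fin n) (Fin 1) F) :
    (∑ m : Fin n, X ^ (m : ℕ) * Polynomial.C (c m 0)).degree < (n : WithBot ℕ) := by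
  simp only [X_pow_mul_C]
  exact degree_sum_fin_lt fun m => c m 0

theorem eq_sum_fin_of_degree_lt {f : F[X]} (hf : f.degree < (n : WithBot ℕ)) :
    f = ∑ m : Fin n, X ^ (m : ℕ) * Polynomial.C
      ((Matrix.of fun (i : Fin n) (_ : Fin 1) => f.coeff i) m 0) := by
  simp only [X_pow_mul_C, C_mul_X_pow_eq_monomial, Matrix.of_apply]
  rw [Fin.sum_univ_eq_sum_range (fun i => monomial i (f.coeff i))]
  by_cases h0 : f = 0
  · simp [h0]
  · exact f.as_sum_range' n ((natDegree_lt_iff_degree_lt h0).2 hf)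

/-- The `n + 1` columns `v, Av, …, Aⁿv` of `F^{n×1}` are right linearly dependent; normalising a
dependency by its leading coefficient gives a monic polynomial annihilating the pair. -/
theorem exists_monic_leftEval_eq_zero (A : Matrix (Fin n) (Fin n) F)
    (v : Matrix (Fin n) (Fin 1) F) :
    ∃ g : F[X], g.Monic ∧ g.natDegree ≤ n ∧ leftEval A v g = 0 := by
  -- A right dependency over `F` is a left dependency over the opposite division ring.
  have hdep : ¬ LinearIndependent Fᵐᵒᵖ
      (fun (j : Fin (n + 1)) (i : Fin n) => MulOpposite.op ((A ^ (j : ℕ) * v) i 0)) := by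
    intro h
    have := h.fintype_card_le_finrank
    simp at this
  rw [Fintype.not_linearIndependent_iff] at hdep
  obtain ⟨c, hc, j, hj⟩ := hdep
  set f : F[X] := ∑ j : Fin (n + 1), monomial (j : ℕ) (c j).unop with hf
  have hcoeff : f.coeff j = (c j).unop := by
    simp [hf, coeff_monomial, Fin.val_inj]
  have hf0 : f ≠ 0 := by
    intro h
    rw [h, coeff_zero] at hcoeff
    exact hj (MulOpposite.unop_injective (by simpa using hcoeff.symm))
  have hfdeg : f.natDegree ≤ n := by
    refine natDegree_sum_le_of_forall_le _ _ fun i _ => ?_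
    exact (natDegree_monomial_le _).trans (Nat.lt_succ_iff.1 i.2)
  have hfE : leftEval A v f = 0 := by
    rw [hf, leftEval_finset_sum]
    ext i k
    fin_cases k
    have := congrArg MulOpposite.unop (congrFun hc i)
    simp only [Finset.sum_apply, Pi.smul_apply, smul_eq_mul, Finset.unop_sum,
      MulOpposite.unop_mul, MulOpposite.unop_op, Pi.zero_apply, MulOpposite.unop_zero] at this
    rw [Matrix.sum_apply, Matrix.zero_apply, ← this]
    refine Finset.sum_congr rfl fun m _ => ?_
    rw [leftEval_monomial, Matrix.mul_apply]
    simp [oneByOne]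
  exact ⟨f * Polynomial.C f.leadingCoeff⁻¹, monic_mul_leadingCoeff_inv hf0,
    (natDegree_mul_C_le _ _).trans hfdeg, leftEval_mul_eq_zero A v hfE _⟩

end Aux

/-- Theorem `R:1.0a`: `(A, v)` is controllable iff the left interpolation
problem `(vf)^ℓ(A) = b` is solvable for every `b`; in the controllable case the
low-degree solution is `f_ℓ(z) = 𝔄ₙ(z)·𝔠_{A,v}⁻¹·b`, it is the unique solution of
degree `< n`, and the full solution set is `f_ℓ + p·F[z]` where `p` is the minimal
polynomial of the pair. -/
theorem statement14 {F : Type*} [DivisionRing F] {n : ℕ} (hn : 1 ≤ n)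
    (A : Matrix (Fin n) (Fin n) F) (v : Matrix (Fin n) (Fin 1) F) :
    (IsUnit (ctrbMat A v) ↔
      ∀ b : Matrix (Fin n) (Fin 1) F, ∃ f : F[X], leftEval A v f = b) ∧
    (∀ C' : Matrix (Fin n) (Fin n) F,
      ctrbMat A v * C' = 1 → C' * ctrbMat A v = 1 →
      ∀ (b : Matrix (Fin n) (Fin 1) F) (p : F[X]), p.Monic →
      (∀ g : F[X], leftEval A v g = 0 ↔ ∃ h : F[X], g = p * h) →
      ∀ fl : F[X], fl = ∑ m : Fin n, X ^ (m : ℕ) * Polynomial.C ((C' * b) m 0) →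
      (fl.degree < (n : WithBot ℕ) ∧ leftEval A v fl = b ∧
        (∀ f' : F[X], f'.degree < (n : WithBot ℕ) → leftEval A v f' = b → f' = fl) ∧
        (∀ f : F[X], leftEval A v f = b ↔ ∃ h : F[X], f = fl + p * h))) := by
  constructor
  · constructor
    · rintro ⟨u, hu⟩ b
      refine ⟨_, (leftEval_sum_fin A v (((u⁻¹ : _ˣ) : Matrix (Fin n) (Fin n) F) * b)).trans ?_⟩
      rw [← hu, ← Matrix.mul_assoc, Units.mul_inv, Matrix.one_mul]
    · intro h
      obtain ⟨g, hgm, hgd, hg⟩ := exists_monic_leftEval_eq_zero A v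
      have key : ∀ b : Matrix (Fin n) (Fin 1) F,
          ∃ c : Matrix (Fin n) (Fin 1) F, ctrbMat A v * c = b := by
        intro b
        obtain ⟨f, hf⟩ := h b
        have hr : leftEval A v (f %ₘ g) = b := by
          rw [← hf]
          conv_rhs => rw [← modByMonic_add_div f g]
          rw [leftEval_add, leftEval_mul_eq_zero A v hg, add_zero]
        have hd : (f %ₘ g).degree < (n : WithBot ℕ) :=
          (degree_modByMonic_lt f hgm).trans_le (natDegree_le_iff_degree_le.1 hgd)
        refine ⟨Matrix.of fun i _ => (f %ₘ g).coeff i, ?_⟩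
        rw [← leftEval_sum_fin, ← eq_sum_fin_of_degree_lt hd, hr]
      -- The columns of a right inverse are preimages of the standard basis vectors.
      choose c hc using fun k : Fin n =>
        key (Matrix.of fun i _ => (1 : Matrix (Fin n) (Fin n) F) i k)
      refine IsUnit.of_mul_eq_one (Matrix.of fun i k => c k i 0) ?_
      ext i k
      have := congrFun (congrFun (hc k) i) 0
      rw [Matrix.mul_apply] at this ⊢
      exact this
  · intro C' hC1 hC2 b p _ hker fl hfl
    have hb : leftEval A v fl = b := by
      rw [hfl, leftEval_sum_fin, ← Matrix.mul_assoc, hC1, Matrix.one_mul]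
    refine ⟨hfl ▸ degree_sum_fin_lt' _, hb, ?_, ?_⟩
    · intro f' hd hf'
      have h1 := eq_sum_fin_of_degree_lt hd
      rw [h1, leftEval_sum_fin] at hf'
      rw [hfl, ← hf', ← Matrix.mul_assoc, hC2, Matrix.one_mul, ← h1]
    · intro f
      have hsplit : leftEval A v f = b + leftEval A v (f - fl) := by
        rw [← hb, ← leftEval_add, add_sub_cancel]
      rw [hsplit, add_eq_left, hker]
      exact exists_congr fun h => sub_eq_iff_eq_add'
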